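/- arXiv:2405.08904 — 6 statements merged into one kernel-verified Lean document; each statement's English description precedes it below -/
import Mathlib

section
/- Let C ∈ ℝ^{M×n}, let (m_1,n_1),…,(m_N,n_N) be index pairs, and define B^{(0)} := I_n and B^{(ν)} := B^{(ν−1)} R(C B^{(ν−1)}, m_ν, n_ν), assuming the pivot entries (C B^{(ν−1)})_{m_ν,n_ν} are nonzero for every ν = 1,…,N. If additionally C B^{(N)} = 0, then N = rank C, rank B^{(N)} = n − rank C, and the column space (image) of B^{(N)} equals the nullspace of C. -/
/-!
Write `D = C * B ν`. Passing from `ν` to `ν + 1` replaces `D` by `D * R`, whose row `m` vanishes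
although the column `D eₙ'` has the nonzero entry `D m n'`; so the image shrinks strictly and
`rank (C * B ν) + ν ≤ rank C` (`elimR_rank_mul_lt`), giving `N ≤ rank C`. On the other hand `R`
differs from the identity by a matrix of rank at most one, so `n ≤ rank (B ν) + ν`
(`elimR_rank_le_mul_add_one`). As `C * B N = 0` puts the image of `B N` inside the nullspace of `C`,
of dimension `n - rank C`, all these inequalities are equalities at `ν = N`.
-/

open Matrix

/-- The elimination matrix `R(C, m, n') = I - (C m n')⁻¹ eₙ' (eₘᵀ C)`. -/
noncomputable def elimR {M n : ℕ} (C : Matrix (Fin M) (Fin n) ℝ) (m : Fin M) (n' : Fin n) :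
    Matrix (Fin n) (Fin n) ℝ :=
  1 - (C m n')⁻¹ • Matrix.of (fun i j => if i = n' then C m j else 0)

theorem elimR_eq_vecMulVec {M n : ℕ} (C : Matrix (Fin M) (Fin n) ℝ) (m : Fin M) (n' : Fin n) :
    elimR C m n' = 1 - vecMulVec ((C m n')⁻¹ • Pi.single n' (1 : ℝ)) (C m) := by
  ext i j
  by_cases h : i = n' <;> simp [elimR, vecMulVec_apply, h]

/-- Elimination clears the pivot row. -/
theorem elimR_mul_row {M n : ℕ} (D : Matrix (Fin M) (Fin n) ℝ) (m : Fin M) (n' : Fin n)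
    (h : D m n' ≠ 0) (j : Fin n) : (D * elimR D m n') m j = 0 := by
  rw [elimR_eq_vecMulVec, Matrix.mul_sub, mul_vecMulVec]
  simp [vecMulVec_apply, mulVec_smul, h]

/-- An elimination step strictly lowers the rank: the pivot column is lost from the image. -/
theorem elimR_rank_mul_lt {M n : ℕ} (D : Matrix (Fin M) (Fin n) ℝ) (m : Fin M) (n' : Fin n)
    (h : D m n' ≠ 0) : (D * elimR D m n').rank < D.rank := by
  refine Submodule.finrank_lt_finrank_of_lt (SetLike.lt_iff_le_and_exists.2 ⟨?_, ?_⟩)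
  · rw [mulVecLin_mul]
    exact LinearMap.range_comp_le_range _ _
  · refine ⟨D *ᵥ Pi.single n' 1, ⟨_, rfl⟩, ?_⟩
    rintro ⟨x, hx⟩
    have hm := congrFun hx m
    rw [mulVecLin_apply, mulVec, dotProduct] at hm
    simp only [elimR_mul_row D m n' h] at hm
    simp at hm
    exact h hm.symm

/-- Multiplying by an elimination matrix lowers the rank by at most one. -/
theorem elimR_rank_le_mul_add_one {M n : ℕ} (A : Matrix (Fin n) (Fin n) ℝ)
    (D : Matrix (Fin M) (Fin n) ℝ) (m : Fin M) (n' : Fin n) :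
    A.rank ≤ (A * elimR D m n').rank + 1 := by
  have hA : A = A * elimR D m n' +
      vecMulVec (A *ᵥ ((D m n')⁻¹ • Pi.single n' (1 : ℝ))) (D m) := by
    rw [elimR_eq_vecMulVec, Matrix.mul_sub, mul_vecMulVec, Matrix.mul_one, sub_add_cancel]
  set E := A * elimR D m n'
  set F := vecMulVec (A *ᵥ ((D m n')⁻¹ • Pi.single n' (1 : ℝ))) (D m)
  have hF : F.rank ≤ 1 := rank_vecMulVec_le _ _
  have hr : LinearMap.range A.mulVecLin ≤
      LinearMap.range E.mulVecLin ⊔ LinearMap.range F.mulVecLin := by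
    rw [hA, mulVecLin_add]
    exact LinearMap.range_add_le _ _
  calc A.rank ≤ _ := Submodule.finrank_mono hr
    _ ≤ E.rank + F.rank := Submodule.finrank_add_le_finrank_add_finrank _ _
    _ ≤ _ := Nat.add_le_add_left hF _

/-- if the elimination algorithm terminates (i.e. `C B^{(N)} = 0`), then
`N = rank C`, `rank B^{(N)} = n - rank C` and the image of `B^{(N)}` is the nullspace of `C`. -/
theorem elim_algorithm_basis {M n N : ℕ} (C : Matrix (Fin M) (Fin n) ℝ)
    (mIdx : Fin N → Fin M) (nIdx : Fin N → Fin n)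
    (B : ℕ → Matrix (Fin n) (Fin n) ℝ)
    (hB0 : B 0 = 1)
    (hpivot : ∀ ν : Fin N, (C * B ν) (mIdx ν) (nIdx ν) ≠ 0)
    (hstep : ∀ ν : Fin N, B (ν + 1) = B ν * elimR (C * B ν) (mIdx ν) (nIdx ν))
    (hfin : C * B N = 0) :
    N = C.rank ∧ (B N).rank = n - C.rank ∧
    LinearMap.range (B N).mulVecLin = LinearMap.ker C.mulVecLin := by
  have hC : ∀ ν, ν ≤ N → (C * B ν).rank + ν ≤ C.rank := by
    intro ν
    induction ν with
    | zero => simp [hB0]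
    | succ k ih =>
      intro hk
      have h1 := elimR_rank_mul_lt _ _ _ (hpivot ⟨k, hk⟩)
      have h2 := hstep ⟨k, hk⟩
      simp only at h1 h2
      rw [Matrix.mul_assoc, ← h2] at h1
      have := ih (by omega)
      omega
  have hB : ∀ ν, ν ≤ N → n ≤ (B ν).rank + ν := by
    intro ν
    induction ν with
    | zero => simp [hB0]
    | succ k ih =>
      intro hk
      have h1 := elimR_rank_le_mul_add_one (B k) (C * B k) (mIdx ⟨k, hk⟩) (nIdx ⟨k, hk⟩)
      have h2 := hstep ⟨k, hk⟩
      simp only at h2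
      rw [← h2] at h1
      have := ih (by omega)
      omega
  have hle : LinearMap.range (B N).mulVecLin ≤ LinearMap.ker C.mulVecLin := by
    rw [LinearMap.range_le_ker_iff, ← mulVecLin_mul, hfin, mulVecLin_zero]
  have hker : C.rank + Module.finrank ℝ (LinearMap.ker C.mulVecLin) = n := by
    simpa [Matrix.rank] using C.mulVecLin.finrank_range_add_finrank_ker
  have hfr : (B N).rank ≤ Module.finrank ℝ (LinearMap.ker C.mulVecLin) :=
    Submodule.finrank_mono hle
  have h1 := hC N le_rfl
  have h2 := hB N le_rfl
  refine ⟨by omega, by omega, Submodule.eq_of_le_of_finrank_eq hle ?_⟩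
  change (B N).rank = _
  omega
end

section
/- Let C ∈ ℝ^{M×n}, let (m_1,n_1),…,(m_N,n_N) be index pairs, and define B^{(0)} := I_n and B^{(ν)} := B^{(ν−1)} R(C B^{(ν−1)}, m_ν, n_ν), assuming for every ν = 1,…,N that the pivot entry (C B^{(ν−1)})_{m_ν,n_ν} is nonzero and that (C B^{(ν−1)})_{m_ν,n_ν}·(C B^{(ν−1)})_{m_ν,j} ≤ 0 for all j ≠ n_ν (i.e., n_ν lies in the set 𝓕_{m_ν}(C B^{(ν−1)}) of the algorithm). Then every entry of B^{(N)} is nonnegative. -/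
/-! Each elimination matrix has nonnegative entries under the sign condition on its pivot
(`elimR_nonneg`), and `B N` is a product of such matrices, so it is nonnegative by induction. -/

open Matrix

/-- Row `n'` of `elimR C m n'` has entries `-C m j / C m n'` for `j ≠ n'`, nonnegative by the sign
condition, and `0` for `j = n'`; every other row is a row of the identity. -/
lemma elimR_nonneg {M n : ℕ} (C : Matrix (Fin M) (Fin n) ℝ) (m : Fin M) (n' : Fin n)
    (hp : C m n' ≠ 0) (hs : ∀ j, j ≠ n' → C m n' * C m j ≤ 0) (i j : Fin n) :
    0 ≤ elimR C m n' i j := by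
  simp only [elimR, Matrix.sub_apply, Matrix.smul_apply, Matrix.of_apply, smul_eq_mul]
  by_cases hi : i = n'
  · subst hi
    by_cases hj : j = i
    · subst hj
      simp [hp]
    · have h : (C m i)⁻¹ * C m j = C m i * C m j * ((C m i)⁻¹) ^ 2 := by
        field_simp
      have h2 : C m i * C m j * ((C m i)⁻¹) ^ 2 ≤ 0 :=
        mul_nonpos_of_nonpos_of_nonneg (hs j hj) (sq_nonneg _)
      rw [Matrix.one_apply_ne (Ne.symm hj), if_pos rfl, h]
      linarith
  · rw [if_neg hi, Matrix.one_apply]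
    split_ifs <;> norm_num

/-- if each pivot `(m_ν, n_ν)` satisfies the sign condition
`n_ν ∈ 𝓕_{m_ν}(C B^{(ν-1)})`, then every entry of `B^{(N)}` is nonnegative. -/
theorem elim_algorithm_nonneg {M n N : ℕ} (C : Matrix (Fin M) (Fin n) ℝ)
    (mIdx : Fin N → Fin M) (nIdx : Fin N → Fin n)
    (B : ℕ → Matrix (Fin n) (Fin n) ℝ)
    (hB0 : B 0 = 1)
    (hpivot : ∀ ν : Fin N, (C * B ν) (mIdx ν) (nIdx ν) ≠ 0)
    (hsign : ∀ ν : Fin N, ∀ j, j ≠ nIdx ν →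
      (C * B ν) (mIdx ν) (nIdx ν) * (C * B ν) (mIdx ν) j ≤ 0)
    (hstep : ∀ ν : Fin N, B (ν + 1) = B ν * elimR (C * B ν) (mIdx ν) (nIdx ν)) :
    ∀ i j, 0 ≤ B N i j := by
  have key : ∀ k, k ≤ N → ∀ i j, 0 ≤ B k i j := by
    intro k
    induction k with
    | zero =>
      intro _ i j
      rw [hB0, Matrix.one_apply]
      split_ifs <;> norm_num
    | succ k ih =>
      intro hk i j
      have h := hstep ⟨k, hk⟩
      simp only at h
      rw [h, Matrix.mul_apply]
      exact Finset.sum_nonneg fun l _ => mul_nonneg (ih (by omega) i l)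
        (elimR_nonneg _ _ _ (hpivot ⟨k, hk⟩) (hsign ⟨k, hk⟩) l j)
  exact key N le_rfl
end

section
/- Let C ∈ ℝ^{M×n} satisfy C𝟙 = 0 (all row sums of C are zero). Then for any admissible pivot (m,n') with C_{m,n'} ≠ 0 one has R(C,m,n')𝟙 = 𝟙, and consequently, for any iteration B^{(0)} := I_n, B^{(ν)} := B^{(ν−1)} R(C B^{(ν−1)}, m_ν, n_ν) with nonzero pivot entries (C B^{(ν−1)})_{m_ν,n_ν} for ν = 1,…,N, one has C B^{(ν)}𝟙 = 0 for every ν and B^{(N)}𝟙 = 𝟙 (the constructed basis forms a partition of unity). -/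
/-!
If `C 𝟙 = 0`, then `eₘᵀ C 𝟙 = 0`, so the rank-one correction in `R(C, m, n')` kills `𝟙` and
`R(C, m, n') 𝟙 = 𝟙` (`elimR_mulVec_one`). By induction on `ν`, `B^{(ν)} 𝟙 = 𝟙`: this gives
`C B^{(ν)} 𝟙 = C 𝟙 = 0`, so the next elimination matrix, built from `C B^{(ν)}`, fixes `𝟙` too.
-/

open Matrix

/-- The correction term annihilates `𝟙` whatever scalar multiplies it. -/
theorem elimR_mulVec_one {M n : ℕ} (C : Matrix (Fin M) (Fin n) ℝ)
    (hC : C.mulVec (fun _ => 1) = 0) (m : Fin M) (n' : Fin n) :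
    (elimR C m n').mulVec (fun _ => 1) = fun _ => 1 := by
  have hrow : ∑ j, C m j = 0 := by
    simpa [Matrix.mulVec, dotProduct] using congrFun hC m
  have hcorr : (Matrix.of (fun i j => if i = n' then C m j else 0) :
      Matrix (Fin n) (Fin n) ℝ).mulVec (fun _ => 1) = 0 := by
    ext i
    by_cases h : i = n' <;> simp [Matrix.mulVec, dotProduct, h, hrow]
  rw [elimR, Matrix.sub_mulVec, Matrix.smul_mulVec, hcorr, Matrix.one_mulVec, smul_zero, sub_zero]

/-- if all row sums of `C` vanish (`C 𝟙 = 0`), then every elimination matrix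
fixes the all-ones vector, every iterate satisfies `C B^{(ν)} 𝟙 = 0`, and `B^{(N)} 𝟙 = 𝟙`
(the constructed basis forms a partition of unity). -/
theorem elim_algorithm_partition_of_unity {M n N : ℕ} (C : Matrix (Fin M) (Fin n) ℝ)
    (hC : C.mulVec (fun _ => 1) = 0) :
    (∀ (m : Fin M) (n' : Fin n), C m n' ≠ 0 →
      (elimR C m n').mulVec (fun _ => 1) = fun _ => 1) ∧
    ∀ (mIdx : Fin N → Fin M) (nIdx : Fin N → Fin n)
      (B : ℕ → Matrix (Fin n) (Fin n) ℝ),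
      B 0 = 1 →
      (∀ ν : Fin N, (C * B ν) (mIdx ν) (nIdx ν) ≠ 0) →
      (∀ ν : Fin N, B (ν + 1) = B ν * elimR (C * B ν) (mIdx ν) (nIdx ν)) →
      (∀ ν ≤ N, (C * B ν).mulVec (fun _ => 1) = 0) ∧
      (B N).mulVec (fun _ => 1) = fun _ => 1 := by
  refine ⟨fun m n' _ => elimR_mulVec_one C hC m n', fun mIdx nIdx B hB0 _ hB => ?_⟩
  have key : ∀ ν ≤ N, (B ν).mulVec (fun _ => 1) = fun _ => 1 := by
    intro ν
    induction ν with
    | zero => intro _; rw [hB0, Matrix.one_mulVec]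
    | succ k ih =>
      intro hk
      have hBk := ih (by omega)
      have hCB : (C * B k).mulVec (fun _ => 1) = 0 := by
        rw [← Matrix.mulVec_mulVec, hBk, hC]
      have hstep := hB ⟨k, hk⟩
      simp only at hstep
      rw [hstep, ← Matrix.mulVec_mulVec, elimR_mulVec_one _ hCB, hBk]
  refine ⟨fun ν hν => ?_, key N le_rfl⟩
  rw [← Matrix.mulVec_mulVec, key ν hν, hC]
end

section
/- Let û : ℝ² → ℝ be twice continuously differentiable on [0,1]² and let ĥ ∈ (0,1]. Then ∫₀¹ (∂_x û(x,0))² dx ≤ 2ĥ⁻¹ ∫_{[0,1]²} (∂_x û(x,y))² dx dy + ĥ ∫_{[0,1]²} (∂_x ∂_y û(x,y))² dx dy. -/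
/-!
On each vertical segment apply the one-dimensional trace inequality
`f(0)² ≤ 2 h⁻¹ ∫₀¹ f² + h ∫₀¹ f'²` to `f = ux (x, ·)`, `f' = uxy (x, ·)`, and integrate over `x`.

The one-dimensional inequality comes from integrating the derivative of `(y - 1) f(y)²`, which
equals `f² - 2 (1 - y) f f'`: Young's inequality with weight `h` bounds it by
`(1 + h⁻¹) f² + h f'²`, and `1 ≤ h⁻¹` since `h ≤ 1`.
Integrating over `x` needs the inner integrals to be integrable in `x`, which Fubini's theorem
provides for functions continuous on the square.
-/

/-- One-dimensional weighted trace inequality at the left end of `[0, 1]`. -/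
lemma trace_inequality_interval (f f' : ℝ → ℝ)
    (hf : ∀ y ∈ Set.Icc (0 : ℝ) 1, HasDerivAt f (f' y) y)
    (hf' : ContinuousOn f' (Set.Icc (0 : ℝ) 1))
    (h : ℝ) (h0 : 0 < h) (h1 : h ≤ 1) :
    f 0 ^ 2 ≤ 2 * h⁻¹ * (∫ y in (0 : ℝ)..1, f y ^ 2) + h * ∫ y in (0 : ℝ)..1, f' y ^ 2 := by
  have hfc : ContinuousOn f (Set.Icc (0 : ℝ) 1) := fun y hy =>
    (hf y hy).continuousAt.continuousWithinAt
  have I : Set.uIcc (0 : ℝ) 1 = Set.Icc 0 1 := Set.uIcc_of_le zero_le_one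
  have hg : ContinuousOn (fun y => f y ^ 2 - 2 * (1 - y) * f y * f' y) (Set.Icc (0 : ℝ) 1) := by
    fun_prop
  have hgi : IntervalIntegrable (fun y => f y ^ 2 - 2 * (1 - y) * f y * f' y)
      MeasureTheory.volume 0 1 := (I ▸ hg).intervalIntegrable
  have i1 : IntervalIntegrable (fun y => f y ^ 2) MeasureTheory.volume 0 1 :=
    (I ▸ hfc.pow 2).intervalIntegrable
  have i2 : IntervalIntegrable (fun y => f' y ^ 2) MeasureTheory.volume 0 1 :=
    (I ▸ hf'.pow 2).intervalIntegrable
  have ftc : ∫ y in (0 : ℝ)..1, (f y ^ 2 - 2 * (1 - y) * f y * f' y) = f 0 ^ 2 := by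
    rw [intervalIntegral.integral_eq_sub_of_hasDerivAt (f := fun y => (y - 1) * f y ^ 2) _ hgi]
    · simp
    · intro y hy
      refine (((hasDerivAt_id y).sub_const 1).mul ((hf y (I ▸ hy)).pow 2)).congr_deriv ?_
      simp
      ring
  rw [← ftc, ← intervalIntegral.integral_const_mul, ← intervalIntegral.integral_const_mul,
    ← intervalIntegral.integral_add (i1.const_mul _) (i2.const_mul _)]
  refine intervalIntegral.integral_mono_on zero_le_one hgi
    ((i1.const_mul _).add (i2.const_mul _)) fun y hy => ?_
  have e : h⁻¹ * h = 1 := inv_mul_cancel₀ h0.ne'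
  have hinv : 1 ≤ h⁻¹ := (one_le_inv₀ h0).2 h1
  -- Young's inequality: the square `h⁻¹ (f + h (1 - y) f')²`, expanded, is nonnegative.
  have young : 0 ≤ h⁻¹ * f y ^ 2 + 2 * (1 - y) * f y * f' y + h * ((1 - y) ^ 2 * f' y ^ 2) := by
    have := mul_nonneg (inv_nonneg.2 h0.le) (sq_nonneg (f y + h * (1 - y) * f' y))
    refine this.trans_eq ?_
    linear_combination (2 * (1 - y) * f y * f' y + h * ((1 - y) ^ 2 * f' y ^ 2)) * e
  have hy2 : (1 - y) ^ 2 ≤ 1 := by nlinarith [hy.1, hy.2]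
  have a := mul_le_mul_of_nonneg_right hinv (sq_nonneg (f y))
  have b := mul_le_mul_of_nonneg_left (mul_le_mul_of_nonneg_right hy2 (sq_nonneg (f' y))) h0.le
  linarith

lemma intervalIntegrable_inner_integral (F : ℝ × ℝ → ℝ)
    (hF : ContinuousOn F (Set.Icc (0 : ℝ) 1 ×ˢ Set.Icc (0 : ℝ) 1)) :
    IntervalIntegrable (fun x => ∫ y in (0 : ℝ)..1, F (x, y)) MeasureTheory.volume 0 1 := by
  have hi : MeasureTheory.IntegrableOn F (Set.Ioc (0 : ℝ) 1 ×ˢ Set.Ioc (0 : ℝ) 1) :=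
    (hF.integrableOn_compact (isCompact_Icc.prod isCompact_Icc)).mono_set
      (Set.prod_mono Set.Ioc_subset_Icc_self Set.Ioc_subset_Icc_self)
  rw [MeasureTheory.IntegrableOn, MeasureTheory.Measure.volume_eq_prod,
    ← MeasureTheory.Measure.prod_restrict] at hi
  rw [intervalIntegrable_iff_integrableOn_Ioc_of_le zero_le_one]
  simp only [intervalIntegral.integral_of_le (zero_le_one (α := ℝ))]
  exact hi.integral_prod_left


/-- trace inequality for the tangential derivative on the unit square.
For `û` twice continuously differentiable on `[0,1]²` (with `∂_x û = ux` and
`∂_y ∂_x û = uxy`) and `ĥ ∈ (0,1]`: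
`∫₀¹ (∂_x û)(x,0)² dx ≤ 2 ĥ⁻¹ ∫_{[0,1]²} (∂_x û)² + ĥ ∫_{[0,1]²} (∂_x ∂_y û)²`. -/
theorem trace_inequality_square_deriv (u ux uxy : ℝ × ℝ → ℝ)
    (hu : ContDiffOn ℝ 2 u (Set.Icc (0 : ℝ) 1 ×ˢ Set.Icc (0 : ℝ) 1))
    (hdx : ∀ q ∈ Set.Icc (0 : ℝ) 1 ×ˢ Set.Icc (0 : ℝ) 1,
      HasDerivAt (fun x => u (x, q.2)) (ux q) q.1)
    (hdxy : ∀ q ∈ Set.Icc (0 : ℝ) 1 ×ˢ Set.Icc (0 : ℝ) 1,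
      HasDerivAt (fun y => ux (q.1, y)) (uxy q) q.2)
    (hcontx : ContinuousOn ux (Set.Icc (0 : ℝ) 1 ×ˢ Set.Icc (0 : ℝ) 1))
    (hcontxy : ContinuousOn uxy (Set.Icc (0 : ℝ) 1 ×ˢ Set.Icc (0 : ℝ) 1))
    (h : ℝ) (hh : h ∈ Set.Ioc (0 : ℝ) 1) :
    (∫ x in (0 : ℝ)..1, (ux (x, 0)) ^ 2)
      ≤ 2 * h⁻¹ * (∫ x in (0 : ℝ)..1, ∫ y in (0 : ℝ)..1, (ux (x, y)) ^ 2)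
        + h * (∫ x in (0 : ℝ)..1, ∫ y in (0 : ℝ)..1, (uxy (x, y)) ^ 2) := by
  have I : Set.uIcc (0 : ℝ) 1 = Set.Icc 0 1 := Set.uIcc_of_le zero_le_one
  have i0 : IntervalIntegrable (fun x => ux (x, 0) ^ 2) MeasureTheory.volume 0 1 := by
    apply ContinuousOn.intervalIntegrable
    rw [I]
    exact (hcontx.comp (by fun_prop) fun x hx => ⟨hx, by simp⟩).pow 2
  have i1 := intervalIntegrable_inner_integral (fun q => ux q ^ 2) (hcontx.pow 2)
  have i2 := intervalIntegrable_inner_integral (fun q => uxy q ^ 2) (hcontxy.pow 2)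
  rw [← intervalIntegral.integral_const_mul, ← intervalIntegral.integral_const_mul,
    ← intervalIntegral.integral_add (i1.const_mul _) (i2.const_mul _)]
  refine intervalIntegral.integral_mono_on zero_le_one i0
    ((i1.const_mul _).add (i2.const_mul _)) fun x hx => ?_
  exact trace_inequality_interval (fun y => ux (x, y)) (fun y => uxy (x, y))
    (fun y hy => hdxy (x, y) ⟨hx, hy⟩)
    (hcontxy.comp (by fun_prop) fun y hy => ⟨hx, hy⟩) h hh.1 hh.2
end

section
/- Let û : ℝ² → ℝ be twice continuously differentiable on [0,1]² and let ĥ ∈ (0,1]. Then û(0,0)² ≤ 4ĥ⁻² ∫_{[0,1]²} û² + 2 ∫_{[0,1]²} ((∂_x û)² + (∂_y û)²) + ĥ² ∫_{[0,1]²} (∂_x ∂_y û)². -/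
/-! The inequality is the tensor square of a one-dimensional trace inequality
`f(0)² ≤ 2 h⁻¹ ∫₀¹ f² + h ∫₀¹ f'²` (`trace_inequality_one_dim`). Weighting `f²` by `1 - t / h`,
which is `1` at `t = 0` and vanishes at `t = h`, the fundamental theorem of calculus expresses `f(0)²`
as `∫₀ʰ (f² / h - 2 (1 - t / h) f f')`, and Young's inequality bounds the cross term by
`f² / h + h f'²`; the assumption `h ≤ 1` lets the integral be enlarged to `[0, 1]`.

In two dimensions, this is applied to `x ↦ u (x, 0)`, and then, for each fixed `x`, to `y ↦ u (x, y)`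
and to `y ↦ ∂ₓu (x, y)`. The constants multiply:
`(2 h⁻¹)² = 4 h⁻²`, `2 h⁻¹ · h = 2` (twice), `h · h = h²`. -/

/-- One-dimensional trace inequality with scale parameter `h`. -/
theorem trace_inequality_one_dim {f f' : ℝ → ℝ} {h : ℝ}
    (hf : ∀ t ∈ Set.Icc (0 : ℝ) 1, HasDerivAt f (f' t) t)
    (hf' : ContinuousOn f' (Set.Icc (0 : ℝ) 1)) (hh : h ∈ Set.Ioc (0 : ℝ) 1) :
    f 0 ^ 2 ≤ 2 * h⁻¹ * (∫ t in (0 : ℝ)..1, f t ^ 2) + h * ∫ t in (0 : ℝ)..1, f' t ^ 2 := by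
  obtain ⟨h0, h1⟩ := hh
  have hfc : ContinuousOn f (Set.Icc (0 : ℝ) 1) :=
    fun t ht => (hf t ht).continuousAt.continuousWithinAt
  have hsub : Set.Icc (0 : ℝ) h ⊆ Set.Icc (0 : ℝ) 1 := Set.Icc_subset_Icc_right h1
  have hGc : ContinuousOn (fun t => 2 * h⁻¹ * f t ^ 2 + h * f' t ^ 2) (Set.Icc (0 : ℝ) 1) := by
    fun_prop
  have hFc : ContinuousOn (fun t => h⁻¹ * f t ^ 2 - (1 - h⁻¹ * t) * (2 * f t * f' t))
      (Set.Icc (0 : ℝ) h) := by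
    have := hfc.mono hsub
    have := hf'.mono hsub
    fun_prop
  have hFi := hFc.intervalIntegrable_of_Icc (μ := MeasureTheory.volume) h0.le
  have ftc : ∫ t in (0 : ℝ)..h, (h⁻¹ * f t ^ 2 - (1 - h⁻¹ * t) * (2 * f t * f' t)) = f 0 ^ 2 := by
    rw [intervalIntegral.integral_eq_sub_of_hasDerivAt
      (f := fun t => -((1 - h⁻¹ * t) * f t ^ 2)) _ hFi]
    · simp [h0.ne']
    · intro t ht
      rw [Set.uIcc_of_le h0.le] at ht
      have d1 : HasDerivAt (fun t : ℝ => 1 - h⁻¹ * t) (-(h⁻¹ * 1)) t :=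
        ((hasDerivAt_id t).const_mul h⁻¹).const_sub 1
      convert (d1.mul ((hf t (hsub ht)).pow 2)).neg using 1
      · rfl
      · simp only [Pi.pow_apply]
        push_cast
        ring
  have hGi := hGc.intervalIntegrable_of_Icc (μ := MeasureTheory.volume) zero_le_one
  calc f 0 ^ 2
      = ∫ t in (0 : ℝ)..h, (h⁻¹ * f t ^ 2 - (1 - h⁻¹ * t) * (2 * f t * f' t)) := ftc.symm
    _ ≤ ∫ t in (0 : ℝ)..h, (2 * h⁻¹ * f t ^ 2 + h * f' t ^ 2) := by
        refine intervalIntegral.integral_mono_on h0.le hFi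
          ((hGc.mono hsub).intervalIntegrable_of_Icc h0.le) fun t ht => ?_
        have hw0 : 0 ≤ h⁻¹ * t := mul_nonneg (by positivity) ht.1
        have hw1 : h⁻¹ * t ≤ 1 := by
          rw [inv_mul_le_iff₀ h0]; linarith [ht.2]
        -- Young's inequality: complete the square in `f + h w f'`, with the weight `w ∈ [0, 1]`.
        have hsq : 0 ≤ h⁻¹ * (f t + h * ((1 - h⁻¹ * t) * f' t)) ^ 2 := by positivity
        have hexp : h⁻¹ * (f t + h * ((1 - h⁻¹ * t) * f' t)) ^ 2
            = h⁻¹ * f t ^ 2 + (1 - h⁻¹ * t) * (2 * f t * f' t)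
              + h * ((1 - h⁻¹ * t) ^ 2 * f' t ^ 2) := by
          field_simp
          ring
        have hw : (1 - h⁻¹ * t) ^ 2 * f' t ^ 2 ≤ f' t ^ 2 :=
          mul_le_of_le_one_left (sq_nonneg _) (by nlinarith)
        have := mul_le_mul_of_nonneg_left hw h0.le
        linarith
    _ ≤ ∫ t in (0 : ℝ)..1, (2 * h⁻¹ * f t ^ 2 + h * f' t ^ 2) := by
        refine intervalIntegral.integral_mono_interval le_rfl h0.le h1 ?_ hGi
        exact Filter.Eventually.of_forall fun t => by
          simp only [Pi.zero_apply]
          positivity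
    _ = _ := by
        rw [intervalIntegral.integral_add, intervalIntegral.integral_const_mul,
          intervalIntegral.integral_const_mul]
        · exact ContinuousOn.intervalIntegrable_of_Icc zero_le_one (by fun_prop)
        · exact ContinuousOn.intervalIntegrable_of_Icc zero_le_one (by fun_prop)

theorem continuousOn_slice {g : ℝ × ℝ → ℝ}
    (hg : ContinuousOn g (Set.Icc (0 : ℝ) 1 ×ˢ Set.Icc (0 : ℝ) 1)) {x : ℝ}
    (hx : x ∈ Set.Icc (0 : ℝ) 1) : ContinuousOn (fun y => g (x, y)) (Set.Icc (0 : ℝ) 1) :=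
  hg.comp (by fun_prop) fun _ hy => ⟨hx, hy⟩

/-- Continuity on the closed square only is enough: composing with the projection of `ℝ` onto
`[0, 1]` in both variables gives an everywhere continuous integrand with the same integrals. -/
theorem intervalIntegrable_partial_integral {g : ℝ × ℝ → ℝ}
    (hg : ContinuousOn g (Set.Icc (0 : ℝ) 1 ×ˢ Set.Icc (0 : ℝ) 1)) :
    IntervalIntegrable (fun x => ∫ y in (0 : ℝ)..1, g (x, y)) MeasureTheory.volume 0 1 := by
  let p : ℝ → ℝ := fun x => Set.projIcc (0 : ℝ) 1 zero_le_one x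
  have hp : Continuous p := continuous_subtype_val.comp continuous_projIcc
  have hpm : ∀ x, p x ∈ Set.Icc (0 : ℝ) 1 := fun x => (Set.projIcc (0 : ℝ) 1 zero_le_one x).2
  have hpe : ∀ x ∈ Set.Icc (0 : ℝ) 1, p x = x := fun x hx => by
    simp only [p, Set.projIcc_of_mem zero_le_one hx]
  have hc : Continuous fun q : ℝ × ℝ => g (p q.1, p q.2) :=
    hg.comp_continuous (by fun_prop) fun q => ⟨hpm _, hpm _⟩
  have hI : Continuous fun x => ∫ y in (0 : ℝ)..1, g (p x, p y) :=
    intervalIntegral.continuous_parametric_intervalIntegral_of_continuous'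
      (f := fun x y => g (p x, p y)) hc 0 1
  refine ContinuousOn.intervalIntegrable_of_Icc zero_le_one
    (hI.continuousOn.congr fun x hx => ?_)
  refine intervalIntegral.integral_congr fun y hy => ?_
  rw [Set.uIcc_of_le zero_le_one] at hy
  simp only [hpe x hx, hpe y hy]


/-- vertex (corner) trace inequality on the unit square. For `û` twice
continuously differentiable on `[0,1]²` (with `∂_x û = ux`, `∂_y û = uy`,
`∂_y ∂_x û = uxy`) and `ĥ ∈ (0,1]`:
`û(0,0)² ≤ 4 ĥ⁻² ∫ û² + 2 ∫ ((∂_x û)² + (∂_y û)²) + ĥ² ∫ (∂_x ∂_y û)²`. -/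
theorem trace_inequality_corner (u ux uy uxy : ℝ × ℝ → ℝ)
    (hu : ContDiffOn ℝ 2 u (Set.Icc (0 : ℝ) 1 ×ˢ Set.Icc (0 : ℝ) 1))
    (hdx : ∀ q ∈ Set.Icc (0 : ℝ) 1 ×ˢ Set.Icc (0 : ℝ) 1,
      HasDerivAt (fun x => u (x, q.2)) (ux q) q.1)
    (hdy : ∀ q ∈ Set.Icc (0 : ℝ) 1 ×ˢ Set.Icc (0 : ℝ) 1,
      HasDerivAt (fun y => u (q.1, y)) (uy q) q.2)
    (hdxy : ∀ q ∈ Set.Icc (0 : ℝ) 1 ×ˢ Set.Icc (0 : ℝ) 1,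
      HasDerivAt (fun y => ux (q.1, y)) (uxy q) q.2)
    (hcontx : ContinuousOn ux (Set.Icc (0 : ℝ) 1 ×ˢ Set.Icc (0 : ℝ) 1))
    (hconty : ContinuousOn uy (Set.Icc (0 : ℝ) 1 ×ˢ Set.Icc (0 : ℝ) 1))
    (hcontxy : ContinuousOn uxy (Set.Icc (0 : ℝ) 1 ×ˢ Set.Icc (0 : ℝ) 1))
    (h : ℝ) (hh : h ∈ Set.Ioc (0 : ℝ) 1) :
    (u (0, 0)) ^ 2
      ≤ 4 * (h ^ 2)⁻¹ * (∫ x in (0 : ℝ)..1, ∫ y in (0 : ℝ)..1, (u (x, y)) ^ 2)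
        + 2 * (∫ x in (0 : ℝ)..1, ∫ y in (0 : ℝ)..1,
            ((ux (x, y)) ^ 2 + (uy (x, y)) ^ 2))
        + h ^ 2 * (∫ x in (0 : ℝ)..1, ∫ y in (0 : ℝ)..1, (uxy (x, y)) ^ 2) := by
  have h0 : 0 < h := hh.1
  have huc : ContinuousOn u (Set.Icc (0 : ℝ) 1 ×ˢ Set.Icc (0 : ℝ) 1) := hu.continuousOn
  have zmem : (0 : ℝ) ∈ Set.Icc (0 : ℝ) 1 := ⟨le_rfl, zero_le_one⟩
  have hbot : ∀ {g : ℝ × ℝ → ℝ}, ContinuousOn g (Set.Icc (0 : ℝ) 1 ×ˢ Set.Icc (0 : ℝ) 1) →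
      ContinuousOn (fun x => g (x, 0)) (Set.Icc (0 : ℝ) 1) := fun hg =>
    hg.comp (by fun_prop) fun _ hx => ⟨hx, zmem⟩
  have i0 := intervalIntegrable_partial_integral (huc.pow 2)
  have ix := intervalIntegrable_partial_integral (hcontx.pow 2)
  have iy := intervalIntegrable_partial_integral (hconty.pow 2)
  have ixy := intervalIntegrable_partial_integral (hcontxy.pow 2)
  simp only [Pi.pow_apply] at i0 ix iy ixy
  have key := trace_inequality_one_dim (f := fun x => u (x, 0)) (f' := fun x => ux (x, 0))
    (fun x hx => hdx (x, 0) ⟨hx, zmem⟩) (hbot hcontx) hh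
  have bu : (∫ x in (0 : ℝ)..1, u (x, 0) ^ 2)
      ≤ 2 * h⁻¹ * (∫ x in (0 : ℝ)..1, ∫ y in (0 : ℝ)..1, u (x, y) ^ 2)
        + h * ∫ x in (0 : ℝ)..1, ∫ y in (0 : ℝ)..1, uy (x, y) ^ 2 := by
    rw [← intervalIntegral.integral_const_mul, ← intervalIntegral.integral_const_mul,
      ← intervalIntegral.integral_add (i0.const_mul _) (iy.const_mul _)]
    refine intervalIntegral.integral_mono_on zero_le_one
      (((hbot huc).pow 2).intervalIntegrable_of_Icc zero_le_one)
      ((i0.const_mul _).add (iy.const_mul _)) fun x hx => ?_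
    exact trace_inequality_one_dim (f := fun y => u (x, y)) (f' := fun y => uy (x, y))
      (fun y hy => hdy (x, y) ⟨hx, hy⟩) (continuousOn_slice hconty hx) hh
  have bx : (∫ x in (0 : ℝ)..1, ux (x, 0) ^ 2)
      ≤ 2 * h⁻¹ * (∫ x in (0 : ℝ)..1, ∫ y in (0 : ℝ)..1, ux (x, y) ^ 2)
        + h * ∫ x in (0 : ℝ)..1, ∫ y in (0 : ℝ)..1, uxy (x, y) ^ 2 := by
    rw [← intervalIntegral.integral_const_mul, ← intervalIntegral.integral_const_mul,
      ← intervalIntegral.integral_add (ix.const_mul _) (ixy.const_mul _)]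
    refine intervalIntegral.integral_mono_on zero_le_one
      (((hbot hcontx).pow 2).intervalIntegrable_of_Icc zero_le_one)
      ((ix.const_mul _).add (ixy.const_mul _)) fun x hx => ?_
    exact trace_inequality_one_dim (f := fun y => ux (x, y)) (f' := fun y => uxy (x, y))
      (fun y hy => hdxy (x, y) ⟨hx, hy⟩) (continuousOn_slice hcontxy hx) hh
  have hsplit : (∫ x in (0 : ℝ)..1, ∫ y in (0 : ℝ)..1, (ux (x, y) ^ 2 + uy (x, y) ^ 2))
      = (∫ x in (0 : ℝ)..1, ∫ y in (0 : ℝ)..1, ux (x, y) ^ 2)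
        + ∫ x in (0 : ℝ)..1, ∫ y in (0 : ℝ)..1, uy (x, y) ^ 2 := by
    rw [← intervalIntegral.integral_add ix iy]
    refine intervalIntegral.integral_congr fun x hx => ?_
    rw [Set.uIcc_of_le zero_le_one] at hx
    exact intervalIntegral.integral_add
      (((continuousOn_slice hcontx hx).pow 2).intervalIntegrable_of_Icc zero_le_one)
      (((continuousOn_slice hconty hx).pow 2).intervalIntegrable_of_Icc zero_le_one)
  rw [hsplit]
  refine key.trans ((add_le_add (mul_le_mul_of_nonneg_left bu (by positivity))
    (mul_le_mul_of_nonneg_left bx h0.le)).trans (le_of_eq ?_))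
  field_simp
  ring
end

section
/- Let C ∈ ℝ^{M×n} satisfy C𝟙 = 0. Suppose row ν of C is supported on exactly two columns a ≠ b, i.e., C_{ν,j} = 0 for all j ∉ {a,b} and C_{ν,a} ≠ 0. Then C_{ν,b} = −C_{ν,a}, and the matrix C' := C·R(C,ν,a) satisfies, for every row i: C'_{i,a} = 0, C'_{i,b} = C_{i,a} + C_{i,b}, and C'_{i,j} = C_{i,j} for all j ∉ {a,b}. -/
/-!
Multiplying `C` on the right by its own elimination matrix subtracts from each row `i` the multiple
`C i a / C ν a` of the pivot row `ν` (`mul_elimR_apply`). Since the pivot row sums to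
zero and has only the entries in columns `a` and `b`, it is `C ν a` times `e_aᵀ - e_bᵀ`, so the
operation moves the entry `C i a` from column `a` to column `b`.
-/

open Matrix

/-- Entrywise, the elimination step subtracts from each row `i` the multiple of the pivot row `m`
that cancels the entry in column `n'`. If the pivot `C m n'` is zero, both sides are `C i j`, since
`0⁻¹ = 0`. -/
lemma mul_elimR_apply {M n : ℕ} (C : Matrix (Fin M) (Fin n) ℝ) (m : Fin M) (n' : Fin n)
    (i : Fin M) (j : Fin n) :
    (C * elimR C m n') i j = C i j - (C m n')⁻¹ * (C i n' * C m j) := by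
  rw [elimR, Matrix.mul_sub, Matrix.mul_one, Matrix.mul_smul]
  simp [Matrix.mul_apply]

/-- if `C 𝟙 = 0` and row `ν` of `C` is supported on exactly the two columns
`a ≠ b` with `C ν a ≠ 0`, then `C ν b = -C ν a` and the elimination step `C' = C · R(C,ν,a)`
zeroes column `a`, adds column `a` to column `b`, and leaves all other columns unchanged. -/
theorem elim_two_entry_row {M n : ℕ} (C : Matrix (Fin M) (Fin n) ℝ)
    (hC : C.mulVec (fun _ => 1) = 0)
    (ν : Fin M) (a b : Fin n) (hab : a ≠ b)
    (hsupp : ∀ j, j ≠ a → j ≠ b → C ν j = 0)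
    (ha : C ν a ≠ 0) :
    C ν b = -C ν a ∧
    ∀ i, (C * elimR C ν a) i a = 0 ∧
      (C * elimR C ν a) i b = C i a + C i b ∧
      ∀ j, j ≠ a → j ≠ b → (C * elimR C ν a) i j = C i j := by
  have hb : C ν b = -C ν a := by
    have h : ∑ j, C ν j = 0 := by
      simpa [Matrix.mulVec, dotProduct] using congrFun hC ν
    rw [Fintype.sum_eq_add a b hab fun j hj => hsupp j hj.1 hj.2] at h
    linarith
  refine ⟨hb, fun i => ⟨?_, ?_, fun j hja hjb => ?_⟩⟩
  · rw [mul_elimR_apply]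
    field_simp
    ring
  · rw [mul_elimR_apply, hb]
    field_simp
    ring
  · rw [mul_elimR_apply, hsupp j hja hjb]
    ring
end
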